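/- Let θ be an irrational real number, let β be a real number with 0 < β < 1, let x, y ∈ ℝ and k ∈ ℤ. Then c(θ, β, x)(n + k) = c(θ, β, y)(n) holds for every n ∈ ℤ if and only if x + k·θ − y ∈ ℤ. Consequently, the shift orbit of c(θ, β, x) contains c(θ, β, y) if and only if y lies in the orbit of x under the rotation by θ on ℝ/ℤ. -/

import Mathlib

/-!
Replacing `x` by `x + kθ` reduces the claim to: if `c(θ, β, z) = c(θ, β, y)`, then `z - y ∈ ℤ`.
Otherwise `δ = fract (z - y)` lies in `(0, 1)`, and the open interval
`(max 0 (β - δ), min β (1 - δ))` is nonempty. A point `t` in it has `t < β ≤ t + δ < 1`, so the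
translation by `δ` carries `t` from `[0, β)` into `[β, 1)`. Since `θ` is irrational, the orbit of
`y` is dense modulo `1` (`exists_orbit_mem_Ioo`) and meets this interval, where the two codings
then differ.
-/

/-- The coding sequence of `x` under the rotation by `θ` with respect to the
partition `[0, β)`, `[β, 1)` of the circle. -/
noncomputable def coding (θ β x : ℝ) (n : ℤ) : Bool :=
  decide (Int.fract (x + (n : ℝ) * θ) < β)

/-- The orbit of `y` under an irrational rotation is dense modulo `1`. -/
theorem exists_orbit_mem_Ioo {θ : ℝ} (hθ : Irrational θ) (y : ℝ) {a b : ℝ} (hab : a < b) :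
    ∃ n m : ℤ, y + (n : ℝ) * θ + (m : ℝ) ∈ Set.Ioo a b := by
  have hd : Dense (AddSubgroup.closure {θ, (1 : ℝ)} : Set ℝ) :=
    dense_addSubgroupClosure_pair_iff.2 (by simpa using hθ)
  obtain ⟨s, hs, h1, h2⟩ := hd.exists_between (sub_lt_sub_right hab y)
  obtain ⟨n, m, rfl⟩ := AddSubgroup.mem_closure_pair.1 hs
  simp only [zsmul_eq_mul, mul_one] at h1 h2
  exact ⟨n, m, by linarith, by linarith⟩

theorem coding_add_shift (θ β x : ℝ) (n k : ℤ) :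
    coding θ β x (n + k) = coding θ β (x + (k : ℝ) * θ) n := by
  unfold coding
  push_cast
  ring_nf

/-- Two points with the same coding sequence agree modulo `1`. -/
theorem exists_int_of_coding_eq {θ β z y : ℝ} (hθ : Irrational θ) (hβ0 : 0 < β) (hβ1 : β < 1)
    (h : ∀ n : ℤ, coding θ β z n = coding θ β y n) : ∃ m : ℤ, z - y = (m : ℝ) := by
  by_contra hne
  have hδ0 : 0 < Int.fract (z - y) := by
    refine (Int.fract_nonneg _).lt_of_ne fun h0 => hne ⟨⌊z - y⌋, ?_⟩
    linarith [Int.floor_add_fract (z - y)]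
  have hδ1 := Int.fract_lt_one (z - y)
  have hfl := Int.floor_add_fract (z - y)
  set δ := Int.fract (z - y)
  have hI : max 0 (β - δ) < min β (1 - δ) :=
    max_lt (lt_min hβ0 (by linarith)) (lt_min (by linarith) (by linarith))
  obtain ⟨n, m, ha, hb⟩ := exists_orbit_mem_Ioo hθ y hI
  obtain ⟨ht0, htβ⟩ := max_lt_iff.1 ha
  obtain ⟨htβ', ht1⟩ := lt_min_iff.1 hb
  set t := y + (n : ℝ) * θ + (m : ℝ) with ht
  have hy : Int.fract (y + (n : ℝ) * θ) = t :=
    Int.fract_eq_iff.2 ⟨ht0.le, by linarith, -m, by push_cast; linarith⟩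
  have hz : Int.fract (z + (n : ℝ) * θ) = t + δ :=
    Int.fract_eq_iff.2 ⟨by linarith, by linarith, ⌊z - y⌋ - m, by push_cast; linarith⟩
  have hn := h n
  simp only [coding, hy, hz, decide_eq_decide] at hn
  linarith [hn.2 htβ']

theorem coding_shift_eq_iff {θ β : ℝ} (x y : ℝ) (k : ℤ) (hθ : Irrational θ) (hβ0 : 0 < β)
    (hβ1 : β < 1) :
    (∀ n : ℤ, coding θ β x (n + k) = coding θ β y n) ↔
      ∃ m : ℤ, x + (k : ℝ) * θ - y = (m : ℝ) := by
  simp only [coding_add_shift]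
  refine ⟨exists_int_of_coding_eq hθ hβ0 hβ1, ?_⟩
  rintro ⟨m, hm⟩ n
  have e : x + (k : ℝ) * θ + (n : ℝ) * θ = y + (n : ℝ) * θ + (m : ℝ) := by linarith
  simp only [coding, e, Int.fract_add_intCast]

theorem coding_shift_orbit (θ β x y : ℝ) (k : ℤ)
    (hθ : Irrational θ) (hβ0 : 0 < β) (hβ1 : β < 1) :
    ((∀ n : ℤ, coding θ β x (n + k) = coding θ β y n) ↔
      ∃ m : ℤ, x + (k : ℝ) * θ - y = (m : ℝ)) ∧
    ((∃ k' : ℤ, ∀ n : ℤ, coding θ β x (n + k') = coding θ β y n) ↔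
      ∃ k' m : ℤ, x + (k' : ℝ) * θ - y = (m : ℝ)) := by
  exact ⟨coding_shift_eq_iff x y k hθ hβ0 hβ1,
    exists_congr fun k' => coding_shift_eq_iff x y k' hθ hβ0 hβ1⟩
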